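/- arXiv:1709.09152 — 3 statements merged into one kernel-verified Lean document; each statement's English description precedes it below -/
import Mathlib

section
/- Let n, k, q be integers with 2 ≤ k ≤ n and q ≥ 1, and let d ≥ 16 be a real number. Let X be a binomial random variable with binom(k,2) independent trials and success probability p, where d/n ≤ p ≤ 2 d^q / n and p ≤ 1. Then P[X > 8 k d^q] ≤ (e k / (8 n))^{32 k}. -/
/-!
The proof is the exponential-moment (Chernoff) method. Write `a = 8 k d ^ q` and let `X` be the
number of successes among `N = choose k 2` trials. By independence `E[s ^ X] = (1 - p + p s) ^ N`,
which is at most `exp (N p s)`, so Markov's inequality gives `P[X > a] ≤ exp (N p s) / s ^ a` for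
every `s ≥ 1`. The choice `s = 8 n / k` makes `N p s ≤ (k ^ 2 / 2) (2 d ^ q / n) (8 n / k) = a`,
hence `P[X > a] ≤ (e / s) ^ a = (e k / (8 n)) ^ a`. Since `e k / (8 n) ≤ 1` and `a ≥ 32 k`, the
exponent can be lowered to `32 k`.
-/

open MeasureTheory
open scoped NNReal ENNReal

/-- The Bernoulli measure on `Bool` with success probability `p`. -/
noncomputable def bernoulliMeasure (p : ℝ≥0) : Measure Bool :=
  p • Measure.dirac true + (1 - p) • Measure.dirac false

/-- The law of `N` independent Bernoulli(`p`) trials. -/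
noncomputable def bernoulliTrials (N : ℕ) (p : ℝ≥0) : Measure (Fin N → Bool) :=
  Measure.pi fun _ => bernoulliMeasure p

/-- The number of successes among the trials (a binomial random variable). -/
def numSuccesses {N : ℕ} (ω : Fin N → Bool) : ℕ :=
  (Finset.univ.filter fun i => ω i = true).card

lemma isProbabilityMeasure_bernoulliMeasure {p : ℝ≥0} (hp : p ≤ 1) :
    IsProbabilityMeasure (bernoulliMeasure p) := by
  constructor
  simp only [bernoulliMeasure, Measure.coe_add, Measure.coe_nnreal_smul_apply, Pi.add_apply,
    measure_univ, mul_one]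
  rw [← ENNReal.coe_add, add_tsub_cancel_of_le hp, ENNReal.coe_one]

lemma integral_bernoulliMeasure {p : ℝ≥0} (hp : p ≤ 1) (f : Bool → ℝ) :
    ∫ b, f b ∂bernoulliMeasure p = p * f true + (1 - p) * f false := by
  rw [bernoulliMeasure, integral_add_measure (.of_finite) (.of_finite),
    integral_smul_nnreal_measure, integral_smul_nnreal_measure, integral_dirac, integral_dirac]
  simp [NNReal.smul_def, NNReal.coe_sub hp]

lemma pow_numSuccesses {N : ℕ} (s : ℝ) (ω : Fin N → Bool) :
    s ^ numSuccesses ω = ∏ i, if ω i = true then s else 1 := by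
  rw [numSuccesses, ← Finset.prod_filter, Finset.prod_const]

/-- The probability generating function of the binomial distribution. -/
lemma integral_pow_numSuccesses (N : ℕ) {p : ℝ≥0} (hp : p ≤ 1) (s : ℝ) :
    ∫ ω, s ^ numSuccesses ω ∂bernoulliTrials N p = (p * s + (1 - p)) ^ N := by
  have := isProbabilityMeasure_bernoulliMeasure hp
  simp_rw [pow_numSuccesses, bernoulliTrials]
  rw [integral_fintype_prod_eq_pow (fun b : Bool => if b = true then s else (1 : ℝ)),
    integral_bernoulliMeasure hp]
  simp

/-- Markov's inequality for `s ^ X`, with the generating function bounded by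
`1 - p + p s ≤ exp (p s)`. -/
lemma rpow_mul_measureReal_numSuccesses_le (N : ℕ) {p : ℝ≥0} (hp : p ≤ 1) {s : ℝ} (hs : 1 ≤ s)
    (a : ℝ) :
    s ^ a * (bernoulliTrials N p).real {ω | a < (numSuccesses ω : ℝ)} ≤
      Real.exp (N * (p * s)) := by
  have := isProbabilityMeasure_bernoulliMeasure hp
  have : IsProbabilityMeasure (bernoulliTrials N p) := by
    unfold bernoulliTrials; infer_instance
  have hs0 : 0 ≤ s := zero_le_one.trans hs
  have hp' : 0 ≤ 1 - (p : ℝ) := sub_nonneg.2 (by exact_mod_cast hp)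
  calc s ^ a * (bernoulliTrials N p).real {ω | a < (numSuccesses ω : ℝ)}
      ≤ s ^ a * (bernoulliTrials N p).real {ω | s ^ a ≤ s ^ numSuccesses ω} := by
        gcongr with ω
        · exact measure_ne_top _ _
        · intro hω
          rw [← Real.rpow_natCast]
          exact Real.rpow_le_rpow_of_exponent_le hs hω.le
    _ ≤ ∫ ω, s ^ numSuccesses ω ∂bernoulliTrials N p :=
        mul_meas_ge_le_integral_of_nonneg (.of_forall fun ω => pow_nonneg hs0 _) .of_finite _
    _ = (p * s + (1 - p)) ^ N := integral_pow_numSuccesses N hp s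
    _ ≤ Real.exp (p * s) ^ N := by
        gcongr
        linarith [Real.add_one_le_exp (p * s : ℝ), p.coe_nonneg]
    _ = Real.exp (N * (p * s)) := (Real.exp_nat_mul _ _).symm

/-- Chernoff-type bound: if `X` is binomial with `choose k 2` trials and success
probability `p` with `d/n ≤ p ≤ 2 d^q / n`, `d ≥ 16`, `2 ≤ k ≤ n`, `q ≥ 1`, then
`P[X > 8 k d^q] ≤ (e k / (8 n))^(32 k)`. -/
theorem binomial_chernoff_shallow_minor_bound
    (n k q : ℕ) (hk2 : 2 ≤ k) (hkn : k ≤ n) (hq : 1 ≤ q)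
    (d : ℝ) (hd : 16 ≤ d) (p : ℝ)
    (hp_lo : d / n ≤ p) (hp_hi : p ≤ 2 * d ^ q / n) (hp1 : p ≤ 1) :
    bernoulliTrials (Nat.choose k 2) (Real.toNNReal p)
      {ω | 8 * k * d ^ q < (numSuccesses ω : ℝ)}
      ≤ ENNReal.ofReal ((Real.exp 1 * k / (8 * n)) ^ (32 * k)) := by
  have hk : (2 : ℝ) ≤ k := by exact_mod_cast hk2
  have hkn' : (k : ℝ) ≤ n := by exact_mod_cast hkn
  have hk0 : (0 : ℝ) < k := by linarith
  have hn0 : (0 : ℝ) < n := by linarith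
  have hp0 : 0 ≤ p := le_trans (by positivity) hp_lo
  have hpN : Real.toNNReal p ≤ 1 := Real.toNNReal_le_one.2 hp1
  have ht : 16 ≤ d ^ q := hd.trans (le_self_pow₀ (by linarith) (by lia))
  set a : ℝ := 8 * k * d ^ q with ha
  set s : ℝ := 8 * n / k with hs
  have hs0 : 0 < s := by positivity
  have hs1 : 1 ≤ s := by rw [hs, le_div_iff₀ hk0]; linarith
  have hmean : (Nat.choose k 2 : ℝ) * (p * s) ≤ a := by
    have hN : (Nat.choose k 2 : ℝ) ≤ k ^ 2 / 2 := by
      rw [Nat.cast_choose_two]; nlinarith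
    calc (Nat.choose k 2 : ℝ) * (p * s) ≤ k ^ 2 / 2 * (2 * d ^ q / n * s) := by gcongr
      _ = a := by rw [ha, hs]; field_simp
  have hmain := rpow_mul_measureReal_numSuccesses_le (Nat.choose k 2) hpN hs1 a
  rw [Real.coe_toNNReal p hp0] at hmain
  have hprob := isProbabilityMeasure_bernoulliMeasure hpN
  have : IsProbabilityMeasure (bernoulliTrials (Nat.choose k 2) (Real.toNNReal p)) := by
    unfold bernoulliTrials; infer_instance
  rw [← ofReal_measureReal]
  apply ENNReal.ofReal_le_ofReal
  have hbase : Real.exp 1 * k / (8 * n) = Real.exp 1 / s := by rw [hs]; field_simp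
  have hbase1 : Real.exp 1 / s ≤ 1 := by
    rw [← hbase, div_le_one (by positivity)]
    have : Real.exp 1 ≤ 8 := by linarith [Real.exp_one_lt_d9]
    gcongr
  rw [hbase]
  calc (bernoulliTrials (Nat.choose k 2) (Real.toNNReal p)).real
        {ω | a < (numSuccesses ω : ℝ)}
      ≤ Real.exp a / s ^ a := by
        rw [le_div_iff₀' (by positivity)]
        exact hmain.trans (Real.exp_le_exp.2 hmean)
    _ = (Real.exp 1 / s) ^ a := by
        rw [Real.div_rpow (Real.exp_pos 1).le hs0.le, Real.exp_one_rpow]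
    _ ≤ (Real.exp 1 / s) ^ ((32 * k : ℕ) : ℝ) := by
        apply Real.rpow_le_rpow_of_exponent_ge (by positivity) hbase1
        push_cast
        nlinarith
    _ = (Real.exp 1 / s) ^ (32 * k) := Real.rpow_natCast _ _
end

section
/- Let n ≥ 1 and r ≥ 0 and k ≥ 2 be integers and let d be a real number with 16 ≤ d ≤ n. The probability that the Erdős–Rényi random graph G(n, d/n) contains an r-shallow topological minor with k nails and at least 8 k d^{2r+1} edges is at most max( n^{-2k}, 2^{-n^{2/3}} ). -/
/-!
The proof is a first-moment argument. Put `L = 2 r + 1`, `p = d / n` and `m = ⌈8 k d ^ L⌉`.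
If the minor exists, then there are a `k`-set `A` of nails and a set `S` of `m` pairs of nails
which are linked by paths of length at most `L`. These paths are edge-disjoint because they are
internally vertex-disjoint (`exists_linked_of_hasShallowTopMinor`).

For fixed `S`, a union bound over systems of edge-disjoint paths (`erdosRenyi_linked_le`) bounds
the probability of such a linkage by `q ^ m`, where `q` sums the probabilities of all potential
paths between two given vertices. There are at most `n ^ l` of them of length `l + 1`, so
`q ≤ ∑ l < L, n ^ l p ^ (l + 1) = (d + ⋯ + d ^ L) / n ≤ 16 d ^ L / (15 n)`.

Hence the probability is at most `(n choose k) (k² choose m) q ^ m`. Since `m ≥ 8 k d ^ L`, the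
last two factors are at most `(k / (2 n)) ^ m`, and `m ≥ 128 k`. If `k ≤ n ^ (2 / 3)` this yields
`n ^ (-2 k)`; otherwise it yields `2 ^ (-k) ≤ 2 ^ (-n ^ (2 / 3))` (`numeric_bound`).
-/


open MeasureTheory
open scoped NNReal ENNReal

/-- The Erdős–Rényi random graph measure: each potential edge (an element of
`Sym2 (Fin n)`) is present independently with probability `p`. -/
noncomputable def erdosRenyi (n : ℕ) (p : ℝ≥0) : Measure (Sym2 (Fin n) → Bool) :=
  Measure.pi fun _ => bernoulliMeasure p

/-- The simple graph on `Fin n` determined by an edge-indicator function. -/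
def graphOf {n : ℕ} (ω : Sym2 (Fin n) → Bool) : SimpleGraph (Fin n) :=
  SimpleGraph.fromEdgeSet {e | ω e = true}

/-- `G` contains `M` as an `r`-shallow topological minor: there is an injection
`φ` of the vertices of `M` (the nails) into `G` and, for each edge of `M`, a path
in `G` of length at most `2r+1` between the corresponding nails, such that these
paths are internally vertex-disjoint: nails appearing on a path are its endpoints,
and any common vertex of the paths of two distinct edges is a nail. -/
def HasShallowTopMinor {n k : ℕ} (G : SimpleGraph (Fin n))
    (M : SimpleGraph (Fin k)) (r : ℕ) : Prop :=
  ∃ (φ : Fin k ↪ Fin n) (P : ∀ i j, M.Adj i j → G.Walk (φ i) (φ j)),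
    (∀ i j (h : M.Adj i j), (P i j h).IsPath ∧ (P i j h).length ≤ 2 * r + 1) ∧
    (∀ i j (h : M.Adj i j) (x : Fin n),
      x ∈ (P i j h).support → x ∈ Set.range φ → x = φ i ∨ x = φ j) ∧
    (∀ i j (h : M.Adj i j) i' j' (h' : M.Adj i' j'), s(i, j) ≠ s(i', j') →
      ∀ x : Fin n, x ∈ (P i j h).support → x ∈ (P i' j' h').support →
        x ∈ Set.range φ)

/-- Within the complete graph on `Fin n` there are at most `n ^ l` walks of length `l + 1` between
two given vertices, since only the `l` interior vertices are free. -/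
lemma card_finsetWalkLength_top_le (n l : ℕ) (u v : Fin n) :
    ((⊤ : SimpleGraph (Fin n)).finsetWalkLength (l + 1) u v).card ≤ n ^ l := by
  classical
  induction l generalizing u with
  | zero =>
    rw [pow_zero, Finset.card_le_one]
    intro a ha b hb
    rw [SimpleGraph.mem_finsetWalkLength_iff] at ha hb
    cases a with
    | nil => simp at ha
    | cons h p =>
      cases p with
      | cons h' p' => simp at ha
      | nil =>
        cases b with
        | cons h p =>
          cases p with
          | cons h' p' => simp at hb
          | nil => rfl
        | nil => simp at hb
  | succ l ih =>
    rw [SimpleGraph.finsetWalkLength]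
    refine Finset.card_biUnion_le.trans ?_
    calc _ ≤ ∑ _w : (⊤ : SimpleGraph (Fin n)).neighborSet u, n ^ l :=
          Finset.sum_le_sum fun w _ => by rw [Finset.card_map]; exact ih _
      _ ≤ n ^ (l + 1) := by
          rw [Finset.sum_const, smul_eq_mul, pow_succ', Finset.card_univ]
          refine Nat.mul_le_mul_right _ ?_
          exact (Fintype.card_subtype_le _).trans_eq (Fintype.card_fin n)

/-- The edge sets of the potential paths of length between `1` and `L` from `e.1` to `e.2`,
i.e. of such paths in the complete graph on `Fin n`. -/
noncomputable def pathEdgeSets (n L : ℕ) (e : Fin n × Fin n) : Finset (Finset (Sym2 (Fin n))) :=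
  open Classical in
  (Finset.range L).biUnion fun l =>
    (((⊤ : SimpleGraph (Fin n)).finsetWalkLength (l + 1) e.1 e.2).filter
      fun w => w.IsPath).image fun w => w.edges.toFinset

lemma sum_pow_pathEdgeSets_le (n L : ℕ) (e : Fin n × Fin n) (p : ℝ≥0∞) :
    ∑ F ∈ pathEdgeSets n L e, p ^ F.card ≤ ∑ l ∈ Finset.range L, (n : ℝ≥0∞) ^ l * p ^ (l + 1) := by
  classical
  unfold pathEdgeSets
  rw [show ∀ t : ℕ → Finset (Finset (Sym2 (Fin n))), (Finset.range L).biUnion t =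
    ((Finset.range L).sigma t).image Sigma.snd from fun t => by ext; simp]
  refine (Finset.sum_image_le_of_nonneg fun _ _ => zero_le).trans ?_
  rw [Finset.sum_sigma]
  refine Finset.sum_le_sum fun l _ => (Finset.sum_image_le_of_nonneg fun _ _ => zero_le).trans ?_
  -- a path does not repeat edges, so its edge set has as many elements as its length
  have hcard : ∀ w ∈ ((⊤ : SimpleGraph (Fin n)).finsetWalkLength (l + 1) e.1 e.2).filter
      (fun w => w.IsPath), p ^ w.edges.toFinset.card = p ^ (l + 1) := by
    intro w hw
    rw [Finset.mem_filter, SimpleGraph.mem_finsetWalkLength_iff] at hw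
    rw [List.toFinset_card_of_nodup hw.2.isTrail.edges_nodup, SimpleGraph.Walk.length_edges, hw.1]
  rw [Finset.sum_congr rfl hcard, Finset.sum_const, nsmul_eq_mul]
  gcongr
  exact_mod_cast (Finset.card_filter_le _ _).trans (card_finsetWalkLength_top_le n l e.1 e.2)

lemma mem_pathEdgeSets {n L : ℕ} {G : SimpleGraph (Fin n)} {u v : Fin n} (w : G.Walk u v)
    (hw : w.IsPath) (h0 : u ≠ v) (hL : w.length ≤ L) :
    w.edges.toFinset ∈ pathEdgeSets n L (u, v) := by
  classical
  have hpos : w.length ≠ 0 := fun h => h0 (SimpleGraph.Walk.eq_of_length_eq_zero h)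
  simp only [pathEdgeSets, Finset.mem_biUnion, Finset.mem_range, Finset.mem_image,
    Finset.mem_filter, SimpleGraph.mem_finsetWalkLength_iff]
  refine ⟨w.length - 1, by omega, w.mapLe le_top, ⟨?_, ?_⟩, ?_⟩
  · simp; omega
  · exact hw.mapLe _
  · ext; simp

instance isFiniteMeasure_bernoulliMeasure (p : ℝ≥0) : IsFiniteMeasure (bernoulliMeasure p) := by
  unfold bernoulliMeasure; infer_instance

lemma erdosRenyi_forall_mem_eq_true {n : ℕ} {p : ℝ≥0} (hp : p ≤ 1) (F : Finset (Sym2 (Fin n))) :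
    erdosRenyi n p {ω | ∀ e ∈ F, ω e = true} = (p : ℝ≥0∞) ^ F.card := by
  classical
  have hset : {ω : Sym2 (Fin n) → Bool | ∀ e ∈ F, ω e = true} =
      Set.pi Set.univ fun e => if e ∈ F then {true} else Set.univ := by
    ext ω
    simp only [Set.mem_ofPred_eq, Set.mem_pi, Set.mem_univ, forall_const]
    refine forall_congr' fun e => ?_
    split_ifs with h <;> simp [h]
  have h1 : bernoulliMeasure p {true} = p := by simp [bernoulliMeasure]
  have h2 : bernoulliMeasure p Set.univ = 1 := by
    simp only [bernoulliMeasure, Measure.coe_add, Measure.coe_nnreal_smul_apply, Pi.add_apply,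
      measure_univ, mul_one]
    exact_mod_cast add_tsub_cancel_of_le hp
  rw [erdosRenyi, hset, Measure.pi_pi]
  simp only [apply_ite, h1, h2]
  rw [Finset.prod_ite_mem, Finset.univ_inter, Finset.prod_const]

/-- The event that the pairs in `S` can be simultaneously linked by open paths of length at most
`L` no two of which share an edge. -/
def linked {n : ℕ} (L : ℕ) (S : Finset (Fin n × Fin n)) : Set (Sym2 (Fin n) → Bool) :=
  {ω | ∃ F : Fin n × Fin n → Finset (Sym2 (Fin n)), (∀ e ∈ S, F e ∈ pathEdgeSets n L e) ∧
    (S : Set (Fin n × Fin n)).PairwiseDisjoint F ∧ ∀ e ∈ S, ∀ x ∈ F e, ω x = true}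

/-- A union bound over all systems of edge-disjoint paths. Edge-disjointness makes the probability
of a system the product of those of its members, so the sum over systems is at most a product of
sums. -/
lemma erdosRenyi_linked_le {n : ℕ} {p : ℝ≥0} (hp : p ≤ 1) (L : ℕ) (S : Finset (Fin n × Fin n)) :
    erdosRenyi n p (linked L S) ≤
      (∑ l ∈ Finset.range L, (n : ℝ≥0∞) ^ l * (p : ℝ≥0∞) ^ (l + 1)) ^ S.card := by
  classical
  set Q := Fintype.piFinset fun e : S => pathEdgeSets n L e with hQ
  set T := Q.filter fun F => (Set.univ : Set S).PairwiseDisjoint F with hT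
  have hsub : linked L S ⊆ ⋃ F ∈ T, {ω | ∀ x ∈ Finset.univ.biUnion F, ω x = true} := by
    rintro ω ⟨F, h1, h2, h3⟩
    simp only [Set.mem_iUnion]
    refine ⟨fun e => F e, ?_, ?_⟩
    · rw [hT, Finset.mem_filter, hQ, Fintype.mem_piFinset]
      exact ⟨fun e => h1 e e.2, fun a _ b _ hab => h2 a.2 b.2 fun h => hab (Subtype.ext h)⟩
    · intro x hx
      obtain ⟨e, -, he⟩ := Finset.mem_biUnion.1 hx
      exact h3 e e.2 x he
  have hprob : ∀ F ∈ T, erdosRenyi n p {ω | ∀ x ∈ Finset.univ.biUnion F, ω x = true} =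
      ∏ e, (p : ℝ≥0∞) ^ (F e).card := by
    intro F hF
    rw [erdosRenyi_forall_mem_eq_true hp, Finset.card_biUnion, Finset.prod_pow_eq_pow_sum]
    exact fun a _ b _ hab => (Finset.mem_filter.1 hF).2 (Set.mem_univ a) (Set.mem_univ b) hab
  have hprod : ∑ F ∈ Q, ∏ e, (p : ℝ≥0∞) ^ (F e).card =
      ∏ e : S, ∑ F ∈ pathEdgeSets n L e, (p : ℝ≥0∞) ^ F.card :=
    (Finset.prod_univ_sum (fun e : S => pathEdgeSets n L e)
      (fun _ F => (p : ℝ≥0∞) ^ F.card)).symm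
  calc erdosRenyi n p (linked L S) ≤ _ := measure_mono hsub
    _ ≤ ∑ F ∈ T, erdosRenyi n p {ω | ∀ x ∈ Finset.univ.biUnion F, ω x = true} :=
        measure_biUnion_finset_le _ _
    _ = ∑ F ∈ T, ∏ e, (p : ℝ≥0∞) ^ (F e).card := Finset.sum_congr rfl hprob
    _ ≤ ∑ F ∈ Q, ∏ e, (p : ℝ≥0∞) ^ (F e).card :=
        Finset.sum_le_sum_of_subset (Finset.filter_subset _ _)
    _ = ∏ e : S, ∑ F ∈ pathEdgeSets n L e, (p : ℝ≥0∞) ^ F.card := hprod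
    _ ≤ ∏ _e : S, ∑ l ∈ Finset.range L, (n : ℝ≥0∞) ^ l * (p : ℝ≥0∞) ^ (l + 1) :=
        Finset.prod_le_prod' fun e _ => sum_pow_pathEdgeSets_le n L e p
    _ = _ := by rw [Finset.prod_const, Finset.card_univ, Fintype.card_coe]

/-- In a shallow topological minor with at least `m` edges, the nails form a `k`-set `A`, and the
paths of any `m` edges are edge-disjoint: an edge common to two paths would have both its ends
among the nails, hence would join the two ends of either path. -/
lemma exists_linked_of_hasShallowTopMinor {n k r m : ℕ} {ω : Sym2 (Fin n) → Bool}
    {M : SimpleGraph (Fin k)} (hm : m ≤ M.edgeSet.ncard)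
    (h : HasShallowTopMinor (graphOf ω) M r) :
    ∃ A ∈ (Finset.univ : Finset (Fin n)).powersetCard k, ∃ S ∈ (A ×ˢ A).powersetCard m,
      ω ∈ linked (2 * r + 1) S := by
  classical
  obtain ⟨φ, P, hP, hnail, hdisj⟩ := h
  let T : Finset (Fin k × Fin k) := Finset.univ.filter fun e => e.1 < e.2 ∧ M.Adj e.1 e.2
  have hT : m ≤ T.card := by
    refine hm.trans ?_
    have : M.edgeSet ⊆ ((T.image fun e => s(e.1, e.2) : Finset (Sym2 (Fin k))) : Set _) := by
      intro e
      induction e using Sym2.ind with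
      | _ i j =>
        intro hij
        rw [SimpleGraph.mem_edgeSet] at hij
        simp only [Finset.coe_image, Set.mem_image, T, Finset.coe_filter, Finset.mem_univ,
          true_and, Set.mem_ofPred_eq]
        rcases lt_or_gt_of_ne hij.ne with hlt | hlt
        · exact ⟨(i, j), ⟨hlt, hij⟩, rfl⟩
        · exact ⟨(j, i), ⟨hlt, hij.symm⟩, Sym2.eq_swap⟩
    refine (Set.ncard_le_ncard this (Finset.finite_toSet _)).trans ?_
    rw [Set.ncard_coe_finset]
    exact Finset.card_image_le
  obtain ⟨T', hT', hcard⟩ := Finset.exists_subset_card_eq hT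
  refine ⟨Finset.univ.map φ, by simp [Finset.mem_powersetCard],
    T'.map (φ.prodMap φ), ?_, ?_⟩
  · rw [Finset.mem_powersetCard]
    refine ⟨?_, by simpa using hcard⟩
    intro e he
    obtain ⟨t, -, rfl⟩ := Finset.mem_map.1 he
    simp
  have key : ∀ e : Fin n × Fin n, ∃ F : Finset (Sym2 (Fin n)), e ∈ T'.map (φ.prodMap φ) →
      ∃ i j, ∃ h : M.Adj i j, i < j ∧ e = (φ i, φ j) ∧ F = (P i j h).edges.toFinset := by
    intro e
    by_cases he : e ∈ T'.map (φ.prodMap φ)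
    · obtain ⟨⟨i, j⟩, ht, rfl⟩ := Finset.mem_map.1 he
      have := hT' ht
      simp only [T, Finset.mem_filter, Finset.mem_univ, true_and] at this
      exact ⟨_, fun _ => ⟨i, j, this.2, this.1, rfl, rfl⟩⟩
    · exact ⟨∅, fun h => absurd h he⟩
  choose F hF using key
  -- an edge of `P i j` both of whose ends are nails joins `φ i` to `φ j`
  have hedge : ∀ i j (h : M.Adj i j) (x : Sym2 (Fin n)), x ∈ (P i j h).edges →
      (∀ a ∈ x, a ∈ Set.range φ) → x = s(φ i, φ j) := by
    intro i j h x hx hr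
    induction x using Sym2.ind with
    | _ a b =>
      have hab : a ≠ b := ((P i j h).adj_of_mem_edges hx).ne
      have ha := hnail i j h a ((P i j h).fst_mem_support_of_mem_edges hx) (hr a (by simp))
      have hb := hnail i j h b ((P i j h).snd_mem_support_of_mem_edges hx) (hr b (by simp))
      rw [Sym2.eq_iff]
      rcases ha with rfl | rfl <;> rcases hb with rfl | rfl <;> simp_all
  refine ⟨F, ?_, ?_, ?_⟩
  · intro e he
    obtain ⟨i, j, h, hlt, rfl, hFe⟩ := hF e he
    rw [hFe]
    exact mem_pathEdgeSets _ (hP i j h).1 (fun h => hlt.ne (φ.injective h)) (hP i j h).2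
  · intro e he e' he' hne
    obtain ⟨i, j, h, hlt, rfl, hFe⟩ := hF e he
    obtain ⟨i', j', h', hlt', rfl, hFe'⟩ := hF e' he'
    change Disjoint _ _
    rw [hFe, hFe', Finset.disjoint_left]
    intro x hx hx'
    rw [List.mem_toFinset] at hx hx'
    have hs : s(i, j) ≠ s(i', j') := by
      intro hs
      rcases Sym2.eq_iff.1 hs with ⟨rfl, rfl⟩ | ⟨rfl, rfl⟩
      · exact hne rfl
      · exact lt_asymm hlt hlt'
    have hr : ∀ a ∈ x, a ∈ Set.range φ := fun a ha =>
      hdisj i j h i' j' h' hs a (SimpleGraph.Walk.mem_support_of_mem_edges hx ha)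
        (SimpleGraph.Walk.mem_support_of_mem_edges hx' ha)
    have := (hedge i j h x hx hr).symm.trans (hedge i' j' h' x hx' hr)
    exact hs (Sym2.map.injective φ.injective (by simpa using this))
  · intro e he x hx
    obtain ⟨i, j, h, hlt, rfl, hFe⟩ := hF e he
    rw [hFe, List.mem_toFinset] at hx
    have := (P i j h).edges_subset_edgeSet hx
    rw [graphOf, SimpleGraph.edgeSet_fromEdgeSet] at this
    exact this.1

lemma choose_le_exp_mul_div_pow (a b : ℕ) :
    (a.choose b : ℝ) ≤ (Real.exp 1 * a / b) ^ b := by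
  rcases Nat.eq_zero_or_pos b with rfl | hb
  · simp
  have hb' : (0 : ℝ) < b := by exact_mod_cast hb
  have h1 := Nat.choose_le_pow_div (α := ℝ) b a
  have h2 := Real.pow_div_factorial_le_exp (b : ℝ) hb'.le b
  have h3 : Real.exp b = Real.exp 1 ^ b := by rw [← Real.exp_nat_mul, mul_one]
  calc (a.choose b : ℝ) ≤ (a : ℝ) ^ b / b.factorial := h1
    _ = ((b : ℝ) ^ b / b.factorial) * ((a : ℝ) / b) ^ b := by
        rw [div_pow]; field_simp
    _ ≤ Real.exp 1 ^ b * ((a : ℝ) / b) ^ b := by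
        rw [← h3]; gcongr
    _ = _ := by rw [← mul_pow, mul_div_assoc]

lemma sum_pow_le_of_sixteen_le {d : ℝ} (hd : 16 ≤ d) (L : ℕ) :
    ∑ l ∈ Finset.range L, d ^ (l + 1) ≤ 16 / 15 * d ^ L := by
  induction L with
  | zero => norm_num
  | succ L ih =>
    rw [Finset.sum_range_succ]
    have : 0 < d ^ L := by positivity
    rw [pow_succ] at *
    nlinarith

/-- The numerical estimate behind the union bound. The factors for the edge set and the paths
contribute at most `(k / (2 n)) ^ m` with `m ≥ 128 k`. This beats the choice of the nails: by the
trivial bound `n ^ k` when `k ≤ n ^ (2 / 3)`, and by `(e n / k) ^ k` for larger `k`. -/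
lemma numeric_bound {n k m : ℕ} {D : ℝ} (hk : 1 ≤ k) (hkn : k ≤ n) (hD : 16 ≤ D)
    (hm : 8 * k * D ≤ m) :
    (n.choose k : ℝ) * ((k * k).choose m * (16 / 15 * D / n) ^ m) ≤
      max ((n : ℝ) ^ (-(2 * k : ℝ))) ((2 : ℝ) ^ (-((n : ℝ) ^ ((2 : ℝ) / 3)))) := by
  have hk0 : (0 : ℝ) < k := by exact_mod_cast hk
  have hkn' : (k : ℝ) ≤ n := by exact_mod_cast hkn
  have hn0 : (0 : ℝ) < n := hk0.trans_le hkn'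
  have hm128 : 128 * k ≤ m := by
    have : (128 * k : ℝ) ≤ m := by nlinarith
    exact_mod_cast this
  have hm0 : (0 : ℝ) < m := lt_of_lt_of_le (by positivity) hm
  have he : Real.exp 1 ≤ 3 := by have := Real.exp_one_lt_d9; linarith
  have hx1 : (k : ℝ) / (2 * n) ≤ 1 := by rw [div_le_one (by positivity)]; linarith
  have h1 : ((k * k).choose m : ℝ) * (16 / 15 * D / n) ^ m ≤ ((k : ℝ) / (2 * n)) ^ (128 * k) := by
    calc _ ≤ (Real.exp 1 * (k * k : ℕ) / m) ^ m * (16 / 15 * D / n) ^ m := by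
          gcongr; exact choose_le_exp_mul_div_pow _ _
      _ = (Real.exp 1 * (k * k : ℕ) / m * (16 / 15 * D / n)) ^ m := (mul_pow _ _ _).symm
      _ ≤ ((k : ℝ) / (2 * n)) ^ m := by
          gcongr
          rw [div_mul_div_comm, div_le_div_iff₀ (by positivity) (by positivity)]
          push_cast
          calc Real.exp 1 * (k * k) * (16 / 15 * D) * (2 * n)
              ≤ 3 * (k * k) * (16 / 15 * D) * (2 * n) := by gcongr
            _ ≤ k * (8 * k * D * n) := by
                have : 0 < (k : ℝ) * k * D * n := by positivity
                nlinarith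
            _ ≤ k * (m * n) := by gcongr
      _ ≤ _ := pow_le_pow_of_le_one (by positivity) hx1 hm128
  rcases le_or_gt ((k : ℝ) ^ 3) ((n : ℝ) ^ 2) with hc | hc
  · refine le_max_of_le_left ?_
    have h2 : ((k : ℝ) / (2 * n)) ^ 3 ≤ (n : ℝ)⁻¹ := by
      rw [div_pow, inv_eq_one_div, div_le_div_iff₀ (by positivity) (by positivity)]
      have : 0 < (n : ℝ) ^ 3 := by positivity
      calc (k : ℝ) ^ 3 * n ≤ (n : ℝ) ^ 2 * n := by gcongr
        _ ≤ _ := by nlinarith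
    have h3 : ((k : ℝ) / (2 * n)) ^ (128 * k) ≤ ((n : ℝ)⁻¹) ^ (3 * k) := by
      calc ((k : ℝ) / (2 * n)) ^ (128 * k) ≤ ((k : ℝ) / (2 * n)) ^ (3 * (3 * k)) :=
            pow_le_pow_of_le_one (by positivity) hx1 (by omega)
        _ = (((k : ℝ) / (2 * n)) ^ 3) ^ (3 * k) := pow_mul _ _ _
        _ ≤ _ := by gcongr
    calc _ ≤ (n : ℝ) ^ k * ((n : ℝ)⁻¹) ^ (3 * k) := by
          gcongr
          · exact_mod_cast Nat.choose_le_pow n k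
          · exact h1.trans h3
      _ = (n : ℝ) ^ (-(2 * k : ℝ)) := by
          rw [Real.rpow_neg hn0.le]
          have : (n : ℝ) ^ (2 * k : ℝ) = (n : ℝ) ^ (2 * k) := by
            rw [← Real.rpow_natCast]; push_cast; rfl
          rw [this, inv_pow, show 3 * k = k + 2 * k by ring, pow_add]
          field_simp
  · refine le_max_of_le_right ?_
    have h2 : (n : ℝ) ^ ((2 : ℝ) / 3) ≤ k := by
      have : (n : ℝ) ^ ((2 : ℝ) / 3) = ((n : ℝ) ^ 2) ^ ((3 : ℝ)⁻¹) := by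
        rw [← Real.rpow_natCast, ← Real.rpow_mul hn0.le]; norm_num
      rw [this, Real.rpow_inv_le_iff_of_pos (by positivity) (by positivity) (by norm_num)]
      exact_mod_cast hc.le
    have hx2 : (k : ℝ) / (2 * n) ≤ 1 / 2 := by
      rw [div_le_div_iff₀ (by positivity) (by positivity)]; linarith
    calc _ ≤ (Real.exp 1 * n / k) ^ k * (((k : ℝ) / (2 * n)) ^ (128 * k)) := by
          gcongr; exact choose_le_exp_mul_div_pow _ _
      _ = (Real.exp 1 / 2 * ((k : ℝ) / (2 * n)) ^ 127) ^ k := by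
          rw [pow_mul, ← mul_pow]; congr 1
          rw [pow_succ _ 127]; field_simp
      _ ≤ (1 / 2) ^ k := by
          gcongr
          calc Real.exp 1 / 2 * ((k : ℝ) / (2 * n)) ^ 127 ≤ 3 / 2 * (1 / 2) ^ 127 := by gcongr
            _ ≤ 1 / 2 := by norm_num
      _ = (2 : ℝ) ^ (-(k : ℝ)) := by
          rw [Real.rpow_neg (by norm_num), Real.rpow_natCast, one_div, inv_pow]
      _ ≤ _ := Real.rpow_le_rpow_of_exponent_le (by norm_num) (by linarith)

/-- For `16 ≤ d ≤ n`, the probability that `G(n, d/n)` contains an `r`-shallow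
topological minor with `k` nails and at least `8 k d^(2r+1)` edges is at most
`max (n^(-2k)) (2^(-n^(2/3)))`. -/
theorem shallow_top_minor_many_edges_prob_le
    (n : ℕ) (hn : 1 ≤ n) (r k : ℕ) (hk : 2 ≤ k)
    (d : ℝ) (hd16 : 16 ≤ d) (hdn : d ≤ n) :
    erdosRenyi n (Real.toNNReal (d / n))
      {ω | ∃ M : SimpleGraph (Fin k),
        8 * k * d ^ (2 * r + 1) ≤ (M.edgeSet.ncard : ℝ) ∧
        HasShallowTopMinor (graphOf ω) M r}
      ≤ ENNReal.ofReal
        (max ((n : ℝ) ^ (-(2 * k : ℝ))) ((2 : ℝ) ^ (-((n : ℝ) ^ ((2 : ℝ) / 3))))) := by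
  have hn0 : (0 : ℝ) < n := by linarith
  set p : ℝ≥0 := Real.toNNReal (d / n) with hp_def
  have hp : p ≤ 1 := by
    rw [hp_def, Real.toNNReal_le_one]
    exact (div_le_one hn0).2 hdn
  have hD : 16 ≤ d ^ (2 * r + 1) :=
    hd16.trans (le_self_pow₀ (by linarith) (by omega))
  set m := ⌈8 * k * d ^ (2 * r + 1)⌉₊ with hm_def
  have hsub : {ω | ∃ M : SimpleGraph (Fin k),
        8 * k * d ^ (2 * r + 1) ≤ (M.edgeSet.ncard : ℝ) ∧
        HasShallowTopMinor (graphOf ω) M r} ⊆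
      ⋃ A ∈ (Finset.univ : Finset (Fin n)).powersetCard k, ⋃ S ∈ (A ×ˢ A).powersetCard m,
        linked (2 * r + 1) S := by
    rintro ω ⟨M, hM, h⟩
    obtain ⟨A, hA, S, hS, hω⟩ := exists_linked_of_hasShallowTopMinor (Nat.ceil_le.2 hM) h
    simp only [Set.mem_iUnion]
    exact ⟨A, hA, S, hS, hω⟩
  rcases lt_or_ge n k with hkn | hkn
  · -- there is no room for `k` nails
    have h0 : (Finset.univ : Finset (Fin n)).powersetCard k = ∅ :=
      Finset.powersetCard_eq_empty.2 (by simpa using hkn)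
    refine (measure_mono hsub).trans ?_
    simp [h0]
  have hq : ∑ l ∈ Finset.range (2 * r + 1), (n : ℝ≥0∞) ^ l * (p : ℝ≥0∞) ^ (l + 1) ≤
      ENNReal.ofReal (16 / 15 * d ^ (2 * r + 1) / n) := by
    have hterm : ∀ l ∈ Finset.range (2 * r + 1), (n : ℝ≥0∞) ^ l * (p : ℝ≥0∞) ^ (l + 1) =
        ENNReal.ofReal (d ^ (l + 1) / n) := by
      intro l _
      change (n : ℝ≥0∞) ^ l * (ENNReal.ofReal (d / n)) ^ (l + 1) = _
      rw [← ENNReal.ofReal_natCast, ← ENNReal.ofReal_pow hn0.le,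
        ← ENNReal.ofReal_pow (by positivity), ← ENNReal.ofReal_mul (by positivity)]
      congr 1
      rw [div_pow, pow_succ (n : ℝ)]
      field_simp
    rw [Finset.sum_congr rfl hterm, ← ENNReal.ofReal_sum_of_nonneg fun l _ => by positivity,
      ← Finset.sum_div]
    exact ENNReal.ofReal_le_ofReal
      (div_le_div_of_nonneg_right (sum_pow_le_of_sixteen_le hd16 _) hn0.le)
  refine le_trans ?_ (ENNReal.ofReal_le_ofReal
    (numeric_bound (m := m) (by omega) hkn hD (Nat.le_ceil _)))
  have hd0 : 0 < d := by linarith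
  rw [ENNReal.ofReal_mul (by positivity), ENNReal.ofReal_mul (by positivity),
    ENNReal.ofReal_natCast, ENNReal.ofReal_natCast, ENNReal.ofReal_pow (by positivity)]
  calc _ ≤ _ := measure_mono hsub
    _ ≤ ∑ A ∈ (Finset.univ : Finset (Fin n)).powersetCard k, ∑ S ∈ (A ×ˢ A).powersetCard m,
        erdosRenyi n p (linked (2 * r + 1) S) :=
      (measure_biUnion_finset_le _ _).trans
        (Finset.sum_le_sum fun A _ => measure_biUnion_finset_le _ _)
    _ ≤ ∑ A ∈ (Finset.univ : Finset (Fin n)).powersetCard k, ∑ S ∈ (A ×ˢ A).powersetCard m,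
        ENNReal.ofReal (16 / 15 * d ^ (2 * r + 1) / n) ^ m := by
      refine Finset.sum_le_sum fun A _ => Finset.sum_le_sum fun S hS => ?_
      refine (erdosRenyi_linked_le hp _ S).trans ?_
      rw [(Finset.mem_powersetCard.1 hS).2]
      gcongr
    _ = ∑ A ∈ (Finset.univ : Finset (Fin n)).powersetCard k,
        ((k * k).choose m : ℝ≥0∞) * ENNReal.ofReal (16 / 15 * d ^ (2 * r + 1) / n) ^ m := by
      refine Finset.sum_congr rfl fun A hA => ?_
      rw [Finset.sum_const, Finset.card_powersetCard, Finset.card_product,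
        (Finset.mem_powersetCard.1 hA).2, nsmul_eq_mul]
    _ = _ := by
      rw [Finset.sum_const, Finset.card_powersetCard, Finset.card_univ, Fintype.card_fin,
        nsmul_eq_mul]
end

section
/- Fix an integer r ≥ 1. Let d : ℕ → ℝ satisfy d(n) ≥ 1 for all n and d(n) = n^{o(1)}, i.e., for every ε > 0 there is N such that d(n) ≤ n^ε for all n ≥ N. Then the probability that the Erdős–Rényi random graph G(n, d(n)/n) contains a vertex v whose induced r-neighborhood subgraph has strictly more edges than vertices tends to 0 as n → ∞. In particular, asymptotically almost surely every r-neighborhood subgraph of G(n, d(n)/n) has at most as many edges as vertices. -/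
/-! The argument is a first-moment computation. Suppose the ball `B` of radius `r` about `v` spans
more edges than vertices. A breadth-first spanning tree of `B` uses at most `|B| - 1` of these
edges, so two edges `e₁ ≠ e₂` of the ball lie outside the tree. The tree paths from their four
endpoints up to `v` form a vertex set `S` of bounded size `≤ 4 (r + 1)`, and the `|S| - 1` tree
edges inside `S` together with `e₁, e₂` are `|S| + 1` edges of the graph inside `S`
(`exists_small_dense`).

For a fixed set of `k + 1` edges the probability that all are present is `p ^ (k + 1)`
(`erdosRenyi_all_present`), and there are at most `C n ^ k` such configurations with `|S| = k`.
Hence the probability of a bad ball is at most `C' (n p) ^ K p` for a constant `K`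
(`erdosRenyi_bad_le`), which for `p = d / n` is `C' d ^ (K + 1) / n = n ^ (-1 + o(1))`. -/

open MeasureTheory Filter
open scoped NNReal ENNReal

/-- The `r`-neighborhood of `v` in `G`: all vertices reachable from `v` by a
walk of length at most `r` (this includes `v` itself). -/
def neighborhoodBall {V : Type*} (G : SimpleGraph V) (v : V) (r : ℕ) : Set V :=
  {u | ∃ w : G.Walk v u, w.length ≤ r}

/-- Every vertex `u ≠ v` in the component of `v` has a neighbor one step closer to `v`: a parent
in a breadth-first tree rooted at `v`. -/
lemma exists_parent {V : Type*} (G : SimpleGraph V) (v u : V) (h : G.Reachable u v) (hne : u ≠ v) :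
    ∃ w, G.Adj u w ∧ G.Reachable w v ∧ G.dist w v + 1 = G.dist u v := by
  obtain ⟨p, hp⟩ := h.exists_walk_length_eq_dist
  cases p with
  | nil => exact absurd rfl hne
  | @cons _ w _ hadj q =>
    refine ⟨w, hadj, q.reachable, ?_⟩
    have h1 := SimpleGraph.dist_le q
    obtain ⟨q', hq'⟩ := q.reachable.exists_walk_length_eq_dist
    have h2 := SimpleGraph.dist_le (SimpleGraph.Walk.cons hadj q')
    simp only [SimpleGraph.Walk.length_cons] at hp h2
    omega

lemma mem_neighborhoodBall_iff {V : Type*} (G : SimpleGraph V) (v u : V) (r : ℕ) :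
    u ∈ neighborhoodBall G v r ↔ G.Reachable u v ∧ G.dist u v ≤ r := by
  constructor
  · rintro ⟨w, hw⟩
    refine ⟨w.reachable.symm, ?_⟩
    rw [SimpleGraph.dist_comm]
    exact (SimpleGraph.dist_le w).trans hw
  · rintro ⟨h, hd⟩
    obtain ⟨p, hp⟩ := h.symm.exists_walk_length_eq_dist
    refine ⟨p, ?_⟩
    rw [hp, SimpleGraph.dist_comm]
    exact hd

/-- A ball with more edges than vertices contains a vertex set `S` of size bounded in terms of the
radius which carries at least `|S| + 1` edges. -/
lemma exists_small_dense {V : Type*} [Fintype V] [DecidableEq V] (G : SimpleGraph V) (v : V) (r : ℕ)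
    (h : (neighborhoodBall G v r).ncard
      < (G.induce (neighborhoodBall G v r)).edgeSet.ncard) :
    ∃ S : Finset V, ∃ F : Finset (Sym2 V), S.card ≤ 4 * (r + 1) ∧ F ⊆ S.sym2 ∧
      F.card = S.card + 1 ∧ ∀ e ∈ F, e ∈ G.edgeSet := by
  classical
  set B := neighborhoodBall G v r with hB
  -- The parent map `π` of the breadth-first tree, fixing the root.
  have hpar : ∀ u, ∃ w, (u = v → w = v) ∧ (G.Reachable u v → u ≠ v →
      G.Adj u w ∧ G.Reachable w v ∧ G.dist w v + 1 = G.dist u v) := by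
    intro u
    by_cases hu : u = v
    · exact ⟨v, fun _ => rfl, fun _ h => absurd hu h⟩
    · by_cases hr : G.Reachable u v
      · obtain ⟨w, hw⟩ := exists_parent G v u hr hu
        exact ⟨w, fun h => absurd h hu, fun _ _ => hw⟩
      · exact ⟨u, fun h => absurd h hu, fun h => absurd h hr⟩
  choose π hπv hπ using hpar
  have hπv : π v = v := hπv v rfl
  have hmem : ∀ u, u ∈ B ↔ G.Reachable u v ∧ G.dist u v ≤ r :=
    fun u => mem_neighborhoodBall_iff G v u r
  have hvB : v ∈ B := by rw [hmem]; simp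
  have hπB : ∀ u ∈ B, π u ∈ B := by
    intro u hu
    by_cases huv : u = v
    · rw [huv, hπv]; exact hvB
    · rw [hmem] at hu ⊢
      obtain ⟨_, h2, h3⟩ := hπ u hu.1 huv
      exact ⟨h2, by omega⟩
  have hiterB : ∀ i, ∀ u ∈ B, π^[i] u ∈ B := by
    intro i
    induction i with
    | zero => intro u hu; exact hu
    | succ i ih => intro u hu; rw [Function.iterate_succ_apply]; exact ih _ (hπB u hu)
  have hiterv : ∀ i, ∀ u, G.Reachable u v → G.dist u v ≤ i → π^[i] u = v := by
    intro i
    induction i with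
    | zero => intro u hu hd; exact (hu.dist_eq_zero_iff).1 (by omega)
    | succ i ih =>
      intro u hu hd
      rw [Function.iterate_succ_apply]
      by_cases huv : u = v
      · rw [huv, hπv]; exact ih v (SimpleGraph.Reachable.refl v) (by simp)
      · obtain ⟨_, h2, h3⟩ := hπ u hu huv
        exact ih _ h2 (by omega)
  let t : V → Sym2 V := fun u => s(u, π u)
  -- A tree edge determines its child endpoint, the one farther from the root.
  have htinj : Set.InjOn t (B \ {v}) := by
    rintro a ⟨ha, hav⟩ b ⟨hb, hbv⟩ hab
    obtain ⟨_, _, h3⟩ := hπ a ((hmem a).1 ha).1 hav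
    obtain ⟨_, _, h3'⟩ := hπ b ((hmem b).1 hb).1 hbv
    rcases Sym2.eq_iff.1 hab with ⟨h, _⟩ | ⟨h, h'⟩
    · exact h
    · rw [h'] at h3; rw [← h] at h3'; omega
  let E : Set (Sym2 V) := Sym2.map Subtype.val '' (G.induce B).edgeSet
  have hEcard : E.ncard = (G.induce B).edgeSet.ncard :=
    Set.ncard_image_of_injective _ (Sym2.map.injective Subtype.val_injective)
  have hE : ∀ e ∈ E, e ∈ G.edgeSet ∧ ∀ x ∈ e, x ∈ B := by
    rintro _ ⟨e, he, rfl⟩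
    induction e using Sym2.ind with
    | _ x y =>
      refine ⟨by simpa using he, ?_⟩
      intro z hz
      simp only [Sym2.map_mk, Sym2.mem_iff] at hz
      rcases hz with rfl | rfl
      · exact x.2
      · exact y.2
  have hT : (t '' (B \ {v})).ncard ≤ B.ncard - 1 := by
    refine (Set.ncard_image_le (Set.toFinite _)).trans ?_
    rw [Set.ncard_sdiff_singleton_of_mem hvB]
  have hBpos : 0 < B.ncard := (Set.ncard_pos (Set.toFinite _)).2 ⟨v, hvB⟩
  have hdiff : 1 < (E \ (t '' (B \ {v}))).ncard := by
    have := Set.le_ncard_sdiff (t '' (B \ {v})) E (Set.toFinite _)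
    omega
  obtain ⟨e₁, e₂, ⟨he₁, ht₁⟩, ⟨he₂, ht₂⟩, hne⟩ := (Set.one_lt_ncard_iff (Set.toFinite _)).1 hdiff
  -- `X` holds the endpoints of the two non-tree edges, `S` all ancestors of vertices of `X`.
  let X : Finset V := e₁.toFinset ∪ e₂.toFinset
  have hXB : ∀ x ∈ X, x ∈ B := by
    intro x hx
    simp only [X, Finset.mem_union, Sym2.mem_toFinset] at hx
    rcases hx with hx | hx
    · exact (hE _ he₁).2 x hx
    · exact (hE _ he₂).2 x hx
  have hXcard : X.card ≤ 4 := by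
    have h2 : ∀ e : Sym2 V, e.toFinset.card ≤ 2 := by
      intro e
      rw [Sym2.card_toFinset]
      split_ifs <;> omega
    have := Finset.card_union_le e₁.toFinset e₂.toFinset
    have := h2 e₁
    have := h2 e₂
    simp only [X]
    omega
  let S : Finset V := X.biUnion fun x => (Finset.range (r + 1)).image fun i => π^[i] x
  have hS : ∀ u, u ∈ S ↔ ∃ x ∈ X, ∃ i, i < r + 1 ∧ π^[i] x = u := by
    intro u; simp [S]
  have hXS : ∀ x ∈ X, x ∈ S := fun x hx => (hS x).2 ⟨x, hx, 0, by omega, rfl⟩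
  have hSB : ∀ u ∈ S, u ∈ B := by
    intro u hu
    obtain ⟨x, hx, i, _, rfl⟩ := (hS u).1 hu
    exact hiterB i x (hXB x hx)
  have hvS : v ∈ S := by
    obtain ⟨x, hx⟩ : X.Nonempty := by
      refine ⟨e₁.out.1, ?_⟩
      simp only [X, Finset.mem_union, Sym2.mem_toFinset]
      exact Or.inl (Sym2.out_fst_mem e₁)
    have := (hmem x).1 (hXB x hx)
    exact (hS v).2 ⟨x, hx, r, by omega, hiterv r x this.1 this.2⟩
  have hπS : ∀ u ∈ S, π u ∈ S := by
    intro u hu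
    obtain ⟨x, hx, i, hi, rfl⟩ := (hS u).1 hu
    rw [← Function.iterate_succ_apply' π i x]
    by_cases hir : i + 1 < r + 1
    · exact (hS _).2 ⟨x, hx, i + 1, hir, rfl⟩
    · have := (hmem x).1 (hXB x hx)
      rw [hiterv (i + 1) x this.1 (by omega)]
      exact hvS
  have hsub : ((S.erase v : Finset V) : Set V) ⊆ B \ {v} := by
    intro u hu
    simp only [Finset.coe_erase, Set.mem_sdiff, Finset.mem_coe] at hu
    exact ⟨hSB u hu.1, hu.2⟩
  refine ⟨S, insert e₁ (insert e₂ ((S.erase v).image t)), ?_, ?_, ?_, ?_⟩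
  · calc S.card ≤ X.card * (r + 1) := by
          refine Finset.card_biUnion_le_card_mul _ _ _ fun x _ => ?_
          exact Finset.card_image_le.trans (by simp)
      _ ≤ 4 * (r + 1) := Nat.mul_le_mul_right _ hXcard
  · intro e he
    rw [Finset.mem_sym2_iff]
    simp only [Finset.mem_insert, Finset.mem_image, Finset.mem_erase] at he
    intro z hz
    rcases he with rfl | rfl | ⟨u, ⟨_, hu⟩, rfl⟩
    · exact hXS z (by simp [X, hz])
    · exact hXS z (by simp [X, hz])
    · rcases Sym2.mem_iff.1 hz with rfl | rfl
      · exact hu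
      · exact hπS u hu
  · have hn : ∀ e, e ∉ t '' (B \ {v}) → e ∉ (S.erase v).image t := by
      intro e he hc
      obtain ⟨u, hu, rfl⟩ := Finset.mem_image.1 hc
      exact he ⟨u, hsub hu, rfl⟩
    rw [Finset.card_insert_of_notMem, Finset.card_insert_of_notMem (hn _ ht₂),
      Finset.card_image_of_injOn (htinj.mono hsub), Finset.card_erase_of_mem hvS]
    · have : 0 < S.card := Finset.card_pos.2 ⟨v, hvS⟩
      omega
    · rw [Finset.mem_insert, not_or]
      exact ⟨hne, hn _ ht₁⟩
  · intro e he
    simp only [Finset.mem_insert, Finset.mem_image] at he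
    rcases he with rfl | rfl | ⟨u, hu, rfl⟩
    · exact (hE _ he₁).1
    · exact (hE _ he₂).1
    · have := hsub hu
      exact (hπ u ((hmem u).1 this.1).1 this.2).1

lemma bernoulliMeasure_isProbabilityMeasure (p : ℝ≥0) (hp : p ≤ 1) :
    IsProbabilityMeasure (bernoulliMeasure p) := by
  constructor
  simp only [bernoulliMeasure, Measure.add_apply, Measure.smul_apply, measure_univ]
  simp only [ENNReal.smul_def, smul_eq_mul, mul_one]
  rw [← ENNReal.coe_add, add_tsub_cancel_of_le hp, ENNReal.coe_one]

lemma erdosRenyi_isProbabilityMeasure (n : ℕ) (p : ℝ≥0) (hp : p ≤ 1) :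
    IsProbabilityMeasure (erdosRenyi n p) := by
  have := bernoulliMeasure_isProbabilityMeasure p hp
  unfold erdosRenyi
  infer_instance

lemma erdosRenyi_all_present (n : ℕ) (p : ℝ≥0) (hp : p ≤ 1) (F : Finset (Sym2 (Fin n))) :
    erdosRenyi n p {ω | ∀ e ∈ F, ω e = true} = (p : ℝ≥0∞) ^ F.card := by
  classical
  have := bernoulliMeasure_isProbabilityMeasure p hp
  have hset : {ω : Sym2 (Fin n) → Bool | ∀ e ∈ F, ω e = true}
      = Set.univ.pi fun e => if e ∈ F then {true} else Set.univ := by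
    ext ω
    simp only [Set.mem_ofPred_eq, Set.mem_pi, Set.mem_univ, true_imp_iff]
    refine forall_congr' fun e => ?_
    split_ifs with h <;> simp [h]
  have htrue : bernoulliMeasure p {true} = p := by
    simp only [bernoulliMeasure, Measure.add_apply, Measure.smul_apply, ENNReal.smul_def,
      smul_eq_mul]
    simp
  rw [hset, erdosRenyi, Measure.pi_pi]
  have : ∀ e : Sym2 (Fin n), bernoulliMeasure p (if e ∈ F then {true} else Set.univ)
      = if e ∈ F then (p : ℝ≥0∞) else 1 := by
    intro e
    split_ifs
    · exact htrue
    · exact measure_univ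
  simp only [this]
  rw [Finset.prod_ite_mem, Finset.univ_inter, Finset.prod_const]

/-- Union bound over all vertex sets `S` with `|S| = k ≤ 4 (r + 1)` and all sets of `k + 1`
potential edges inside `S`. -/
lemma erdosRenyi_bad_le (n r : ℕ) (p : ℝ≥0) (hp : p ≤ 1) (hnp : 1 ≤ n * p) :
    erdosRenyi n p {ω | ∃ v : Fin n,
            (neighborhoodBall (graphOf ω) v r).ncard
              < ((graphOf ω).induce (neighborhoodBall (graphOf ω) v r)).edgeSet.ncard}
      ≤ (((4 * (r + 1) + 1 : ℕ) * 2 ^ ((4 * (r + 1) + 1).choose 2) * (n * p) ^ (4 * (r + 1)) * p :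
          ℝ≥0) : ℝ≥0∞) := by
  classical
  set K := 4 * (r + 1)
  have hsub : {ω : Sym2 (Fin n) → Bool | ∃ v : Fin n,
            (neighborhoodBall (graphOf ω) v r).ncard
              < ((graphOf ω).induce (neighborhoodBall (graphOf ω) v r)).edgeSet.ncard}
      ⊆ ⋃ k ∈ Finset.range (K + 1), ⋃ S ∈ (Finset.univ : Finset (Fin n)).powersetCard k,
          ⋃ F ∈ S.sym2.powersetCard (k + 1), {ω | ∀ e ∈ F, ω e = true} := by
    rintro ω ⟨v, hv⟩
    obtain ⟨S, F, hSc, hFS, hFc, hF⟩ := exists_small_dense (graphOf ω) v r hv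
    simp only [Set.mem_iUnion]
    refine ⟨S.card, Finset.mem_range.2 (Nat.lt_succ_of_le hSc), S,
      Finset.mem_powersetCard.2 ⟨Finset.subset_univ _, rfl⟩, F,
      Finset.mem_powersetCard.2 ⟨hFS, hFc⟩, ?_⟩
    intro e he
    have := hF e he
    rw [graphOf, SimpleGraph.edgeSet_fromEdgeSet] at this
    exact this.1
  refine (measure_mono hsub).trans ((measure_biUnion_finset_le _ _).trans ?_)
  have hterm : ∀ k ∈ Finset.range (K + 1),
      erdosRenyi n p (⋃ S ∈ (Finset.univ : Finset (Fin n)).powersetCard k,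
          ⋃ F ∈ S.sym2.powersetCard (k + 1), {ω | ∀ e ∈ F, ω e = true})
        ≤ ((2 ^ ((K + 1).choose 2) * (n * p) ^ K * p : ℝ≥0) : ℝ≥0∞) := by
    intro k hk
    have hk : k ≤ K := Nat.lt_succ_iff.1 (Finset.mem_range.1 hk)
    have hS : ∀ S ∈ (Finset.univ : Finset (Fin n)).powersetCard k,
        erdosRenyi n p (⋃ F ∈ S.sym2.powersetCard (k + 1), {ω | ∀ e ∈ F, ω e = true})
          ≤ ((2 ^ ((K + 1).choose 2) * p ^ (k + 1) : ℝ≥0) : ℝ≥0∞) := by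
      intro S hS
      have hSc := (Finset.mem_powersetCard.1 hS).2
      refine (measure_biUnion_finset_le _ _).trans ?_
      have : ∀ F ∈ S.sym2.powersetCard (k + 1),
          erdosRenyi n p {ω | ∀ e ∈ F, ω e = true} = (p : ℝ≥0∞) ^ (k + 1) := by
        intro F hF
        rw [erdosRenyi_all_present n p hp, (Finset.mem_powersetCard.1 hF).2]
      rw [Finset.sum_congr rfl this, Finset.sum_const, nsmul_eq_mul]
      push_cast
      gcongr
      have h1 : (S.sym2.powersetCard (k + 1)).card ≤ 2 ^ ((K + 1).choose 2) := by
        rw [Finset.card_powersetCard]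
        refine (Nat.choose_le_two_pow _ _).trans ?_
        refine Nat.pow_le_pow_right (by norm_num) ?_
        rw [Finset.card_sym2, hSc]
        exact Nat.choose_le_choose 2 (by omega)
      exact_mod_cast h1
    refine (measure_biUnion_finset_le _ _).trans ((Finset.sum_le_sum hS).trans ?_)
    rw [Finset.sum_const, nsmul_eq_mul, Finset.card_powersetCard, Finset.card_univ,
      Fintype.card_fin, ← ENNReal.coe_natCast, ← ENNReal.coe_mul, ENNReal.coe_le_coe]
    have h1 : ((n.choose k : ℕ) : ℝ≥0) ≤ (n : ℝ≥0) ^ k := by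
      exact_mod_cast Nat.choose_le_pow n k
    calc ((n.choose k : ℕ) : ℝ≥0) * (2 ^ ((K + 1).choose 2) * p ^ (k + 1))
        ≤ (n : ℝ≥0) ^ k * (2 ^ ((K + 1).choose 2) * p ^ (k + 1)) := by gcongr
      _ = 2 ^ ((K + 1).choose 2) * (n * p) ^ k * p := by ring
      _ ≤ 2 ^ ((K + 1).choose 2) * (n * p) ^ K * p := by gcongr
  refine (Finset.sum_le_sum hterm).trans ?_
  rw [Finset.sum_const, Finset.card_range, nsmul_eq_mul, ← ENNReal.coe_natCast, ← ENNReal.coe_mul,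
    ENNReal.coe_le_coe]
  exact le_of_eq (by ring)

/-- A function `d = n ^ o(1)` satisfies `d ^ (K + 1) = o(n)`. -/
lemma tendsto_pow_mul_div (d : ℕ → ℝ) (hd1 : ∀ n, 1 ≤ d n)
    (hdo : ∀ ε : ℝ, 0 < ε → ∃ N : ℕ, ∀ n ≥ N, d n ≤ (n : ℝ) ^ ε) (K : ℕ) :
    Tendsto (fun n : ℕ => d n ^ K * (d n / n)) atTop (nhds 0) := by
  have hlim : Tendsto (fun n : ℕ => (n : ℝ) ^ (-(1 / 2 : ℝ))) atTop (nhds 0) :=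
    (tendsto_rpow_neg_atTop (by norm_num)).comp tendsto_natCast_atTop_atTop
  obtain ⟨N, hN⟩ := hdo (1 / (2 * (K + 1))) (by positivity)
  refine tendsto_of_tendsto_of_tendsto_of_le_of_le' tendsto_const_nhds hlim ?_ ?_
  · refine Eventually.of_forall fun n => ?_
    have := hd1 n
    positivity
  · filter_upwards [eventually_ge_atTop N, eventually_gt_atTop 0] with n hn hn0
    have hn0 : (0 : ℝ) < n := by exact_mod_cast hn0
    have hpos : 0 ≤ d n := zero_le_one.trans (hd1 n)
    have h1 : d n ^ (K + 1) ≤ (n : ℝ) ^ (1 / 2 : ℝ) := by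
      calc d n ^ (K + 1) ≤ ((n : ℝ) ^ (1 / (2 * (K + 1)) : ℝ)) ^ (K + 1) := by
            gcongr
            exact hN n hn
        _ = (n : ℝ) ^ (1 / 2 : ℝ) := by
            rw [← Real.rpow_natCast, ← Real.rpow_mul hn0.le]
            congr 1
            push_cast
            field_simp
    calc d n ^ K * (d n / n) = d n ^ (K + 1) / n := by ring
      _ ≤ (n : ℝ) ^ (1 / 2 : ℝ) / n := by gcongr
      _ = (n : ℝ) ^ (-(1 / 2 : ℝ)) := by
          rw [← Real.rpow_sub_one hn0.ne']
          norm_num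

/-- Fix `r ≥ 1` and let `d(n) ≥ 1` with `d(n) = n^{o(1)}`.  The probability
that `G(n, d(n)/n)` has a vertex whose induced `r`-neighborhood subgraph has
strictly more edges than vertices tends to `0`; in particular, a.a.s. every
`r`-neighborhood subgraph has at most as many edges as vertices. -/
theorem dense_neighborhood_aas_tree_like
    (r : ℕ) (hr : 1 ≤ r) (d : ℕ → ℝ) (hd1 : ∀ n, 1 ≤ d n)
    (hdo : ∀ ε : ℝ, 0 < ε → ∃ N : ℕ, ∀ n ≥ N, d n ≤ (n : ℝ) ^ ε) :
    Tendsto (fun n : ℕ =>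
        erdosRenyi n (Real.toNNReal (d n / n))
          {ω | ∃ v : Fin n,
            (neighborhoodBall (graphOf ω) v r).ncard
              < ((graphOf ω).induce (neighborhoodBall (graphOf ω) v r)).edgeSet.ncard})
      atTop (nhds 0) ∧
    Tendsto (fun n : ℕ =>
        erdosRenyi n (Real.toNNReal (d n / n))
          {ω | ∀ v : Fin n,
            ((graphOf ω).induce (neighborhoodBall (graphOf ω) v r)).edgeSet.ncard
              ≤ (neighborhoodBall (graphOf ω) v r).ncard})
      atTop (nhds 1) := by
  have hp : ∀ᶠ n : ℕ in atTop, Real.toNNReal (d n / n) ≤ 1 ∧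
      (n : ℝ≥0) * Real.toNNReal (d n / n) = Real.toNNReal (d n) := by
    obtain ⟨N, hN⟩ := hdo 1 one_pos
    filter_upwards [eventually_ge_atTop N, eventually_gt_atTop 0] with n hn hn0
    have hn0 : (0 : ℝ) < n := by exact_mod_cast hn0
    have hle := hN n hn
    rw [Real.rpow_one] at hle
    have hpos : 0 ≤ d n := zero_le_one.trans (hd1 n)
    refine ⟨?_, ?_⟩
    · rw [Real.toNNReal_le_one]
      exact (div_le_one hn0).2 hle
    · apply NNReal.coe_injective
      rw [NNReal.coe_mul, NNReal.coe_natCast, Real.coe_toNNReal _ (by positivity),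
        Real.coe_toNNReal _ hpos]
      field_simp
  have hmain : Tendsto (fun n : ℕ =>
        erdosRenyi n (Real.toNNReal (d n / n))
          {ω | ∃ v : Fin n,
            (neighborhoodBall (graphOf ω) v r).ncard
              < ((graphOf ω).induce (neighborhoodBall (graphOf ω) v r)).edgeSet.ncard})
      atTop (nhds 0) := by
    have hlim : Tendsto (fun n : ℕ => (((4 * (r + 1) + 1 : ℕ) * 2 ^ ((4 * (r + 1) + 1).choose 2) *
        (Real.toNNReal (d n ^ (4 * (r + 1)) * (d n / n))) : ℝ≥0) : ℝ≥0∞)) atTop (nhds 0) := by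
      have h1 := (tendsto_real_toNNReal
        (tendsto_pow_mul_div d hd1 hdo (4 * (r + 1)))).const_mul
          (((4 * (r + 1) + 1 : ℕ) : ℝ≥0) * 2 ^ ((4 * (r + 1) + 1).choose 2))
      rw [Real.toNNReal_zero, mul_zero] at h1
      exact ENNReal.tendsto_coe.2 h1
    refine tendsto_of_tendsto_of_tendsto_of_le_of_le' tendsto_const_nhds hlim
      (Eventually.of_forall fun _ => zero_le) ?_
    filter_upwards [hp] with n hn
    have hpos : 0 ≤ d n := zero_le_one.trans (hd1 n)
    refine (erdosRenyi_bad_le n r _ hn.1 ?_).trans (le_of_eq ?_)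
    · rw [hn.2]
      exact Real.one_le_toNNReal.2 (hd1 n)
    · rw [hn.2, Real.toNNReal_mul (by positivity), Real.toNNReal_pow hpos, mul_assoc]
  refine ⟨hmain, ?_⟩
  have hsub := ENNReal.Tendsto.sub (tendsto_const_nhds (x := (1 : ℝ≥0∞))) hmain
    (Or.inl ENNReal.one_ne_top)
  rw [tsub_zero] at hsub
  refine hsub.congr' ?_
  filter_upwards [hp] with n hn
  have := erdosRenyi_isProbabilityMeasure n _ hn.1
  rw [← prob_compl_eq_one_sub (Set.toFinite _).measurableSet]
  congr 1
  ext ω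
  simp
end
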